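/- arXiv:2002.01298 — 2 statements merged into one kernel-verified Lean document; each statement's English description precedes it below -/
import Mathlib

section
/- Let r be a positive integer and let x_1, …, x_r be pairwise distinct real numbers. Then Σ_{j=1}^r ∏_{k≠j, 1≤k≤r} (1 − 1/(x_j − x_k)) = r. (This is the identity established in the proof of Lemma 3.3 after the substitution x_j = (s_j − (a/2)j)/(a/2).) -/
open Finset

/-!
For `n` nodes `v i`, the polynomial `∏ (X - w i) - ∏ (X - v i)` has degree less than `n`, so
Lagrange interpolation recovers it from its values at the nodes, where the second product vanishes.
Comparing coefficients of `X ^ (n - 1)` gives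
`∑ i, (∏ k, (v i - w k)) / ∏ k ≠ i, (v i - v k) = ∑ i, (v i - w i)`.
For the translates `w i = v i + c`, the factor `k = i` of the numerator and each summand on the
right are `-c`; cancelling it leaves `∑ i, ∏ k ≠ i, (1 - c / (v i - v k)) = n`.
-/

section Nodal

open Polynomial Lagrange

variable {ι R F : Type*} [CommRing R] [Field F]

theorem degree_nodal_sub_nodal_lt (s : Finset ι) (v w : ι → R) :
    (nodal s v - nodal s w).degree < #s := by
  nontriviality R
  have h_degree : (nodal s v).degree = (nodal s w).degree := by simp only [degree_nodal]
  have h_leading : (nodal s v).leadingCoeff = (nodal s w).leadingCoeff := by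
    rw [nodal_monic.leadingCoeff, nodal_monic.leadingCoeff]
  simpa only [degree_nodal] using degree_sub_lt_left h_degree nodal_ne_zero h_leading

theorem coeff_nodal_sub_nodal_card_sub_one (s : Finset ι) (v w : ι → R) :
    (nodal s v - nodal s w).coeff (#s - 1) = ∑ i ∈ s, (w i - v i) := by
  obtain rfl | hs := s.eq_empty_or_nonempty
  · simp
  · rw [coeff_sub, nodal_eq, nodal_eq, prod_X_sub_C_coeff_card_pred s v hs.card_pos,
      prod_X_sub_C_coeff_card_pred s w hs.card_pos, sum_sub_distrib]
    ring

theorem sum_prod_sub_div_prod_erase_sub [DecidableEq ι] {s : Finset ι} {v : ι → F}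
    (hv : Set.InjOn v s) (w : ι → F) :
    ∑ i ∈ s, (∏ k ∈ s, (v i - w k)) / ∏ k ∈ s.erase i, (v i - v k) =
      ∑ i ∈ s, (v i - w i) := by
  rw [← coeff_nodal_sub_nodal_card_sub_one,
    coeff_eq_sum hv (degree_nodal_sub_nodal_lt s w v)]
  refine sum_congr rfl fun i hi ↦ ?_
  rw [eval_sub, eval_nodal_at_node hi, sub_zero, eval_nodal]

end Nodal

section Translate

variable {ι F : Type*} [DecidableEq ι] [Field F] {s : Finset ι} {v : ι → F}

theorem prod_sub_add_const_div_prod_erase_sub (hv : Set.InjOn v s) (c : F) {i : ι} (hi : i ∈ s) :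
    (∏ k ∈ s, (v i - (v k + c))) / ∏ k ∈ s.erase i, (v i - v k) =
      -c * ∏ k ∈ s.erase i, (1 - c / (v i - v k)) := by
  rw [← mul_prod_erase s _ hi, mul_div_assoc, ← prod_div_distrib, sub_add_cancel_left]
  congr 1
  refine prod_congr rfl fun k hk ↦ ?_
  have h_ne : v i - v k ≠ 0 :=
    sub_ne_zero.mpr (hv.ne hi (mem_of_mem_erase hk) (ne_of_mem_erase hk).symm)
  rw [← sub_sub, sub_div, div_self h_ne]

theorem sum_prod_one_sub_inv_sub_eq_card_general (hv : Set.InjOn v s) (c : F) :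
    ∑ i ∈ s, ∏ k ∈ s.erase i, (1 - c / (v i - v k)) = #s := by
  obtain rfl | hc := eq_or_ne c 0
  · simp
  refine mul_left_cancel₀ (neg_ne_zero.mpr hc) ?_
  calc -c * ∑ i ∈ s, ∏ k ∈ s.erase i, (1 - c / (v i - v k))
      = ∑ i ∈ s, (∏ k ∈ s, (v i - (v k + c))) / ∏ k ∈ s.erase i, (v i - v k) := by
        rw [mul_sum]
        exact sum_congr rfl fun i hi ↦ (prod_sub_add_const_div_prod_erase_sub hv c hi).symm
    _ = ∑ i ∈ s, (v i - (v i + c)) := sum_prod_sub_div_prod_erase_sub hv (v · + c)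
    _ = -c * #s := by simp only [sub_add_cancel_left, sum_const, nsmul_eq_mul, mul_comm]

end Translate

/-- The identity in the proof of Lemma 3.3: for pairwise distinct reals
`x_1, …, x_r`, `Σ_{j=1}^r ∏_{k≠j} (1 − 1/(x_j − x_k)) = r`. -/
theorem sum_prod_one_sub_inv_sub_eq_card (r : ℕ) (hr : 0 < r)
    (x : Fin r → ℝ) (hx : Function.Injective x) :
    ∑ j : Fin r, ∏ k ∈ Finset.univ.erase j, (1 - 1 / (x j - x k)) = r := by
  simpa only [card_univ, Fintype.card_fin] using
    sum_prod_one_sub_inv_sub_eq_card_general (s := univ) hx.injOn 1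
end

section
/- With the notation of the context, for every nonzero signature s one has the pointwise lower bound τ(s) ≥ (1/((b+1)·(1 + (a/2)(r−1))^r)) · Σ, over those j for which s − ε_j is a signature, of (a_{s−ε_j}/a_s)·(p − (a/2)(j−1) + s_j − 1). (Key estimate in the proof of Theorem 3.6.) -/
open Finset
open scoped Classical

/-- `SigSub s j` says that `s − ε_j` is again a signature. -/
def SigSub {r : ℕ} (s : Fin r → ℕ) (j : Fin r) : Prop :=
  1 ≤ s j ∧ Antitone (Function.update s j (s j - 1))

/-- The coefficient `c'_s(j)` from Lemma 3.3 of the paper. -/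
noncomputable def cPrime {r : ℕ} (a : ℝ) (s : Fin r → ℕ) (j : Fin r) : ℝ :=
  ∏ k ∈ Finset.univ.erase j,
    (((s j : ℝ) - (s k : ℝ) + (a / 2) * (((k : ℕ) : ℝ) - ((j : ℕ) : ℝ) - 1)) /
      ((s j : ℝ) - (s k : ℝ) + (a / 2) * (((k : ℕ) : ℝ) - ((j : ℕ) : ℝ))))

/-- The eigenvalue `τ(s)` with weights `w s = a_s` and `p = 1 + (a/2)(r−1) + b`. -/
noncomputable def tau {r : ℕ} (a b : ℝ) (w : (Fin r → ℕ) → ℝ) (s : Fin r → ℕ) : ℝ :=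
  ∑ j ∈ Finset.univ.filter (fun j : Fin r => SigSub s j),
    (w (Function.update s j (s j - 1)) / w s) *
      ((1 + (a / 2) * ((r : ℝ) - 1) + b) - (a / 2) * ((j : ℕ) : ℝ) + (s j : ℝ) - 1) *
      (((a / 2) * ((r : ℝ) - 1 - ((j : ℕ) : ℝ)) + (s j : ℝ)) /
        (b + (a / 2) * ((r : ℝ) - 1 - ((j : ℕ) : ℝ)) + (s j : ℝ))) *
      cPrime a s j

/-!
With `m = s_j - s_k` and `l = k - j`, the factors of `c'_s(j)` are
`(m + (a/2)(l - 1)) / (m + (a/2)l)`. For `k < j` both numerator and denominator are negative and the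
factor is at least `1`. For `k > j` one has `m ≥ 1` because `s - ε_j` is a signature, so the factor
is at least its value at `m = 1`; these values telescope to `1 / (1 + (a/2)(r - j))`. The remaining
quotient in `τ(s)` has the form `y / (b + y)` with `y ≥ s_j ≥ 1`, hence is at least `1 / (b + 1)`.
Thus the constant `1 / ((b + 1)(1 + (a/2)(r - 1)))`, without the `r`-th power, already works.
-/

lemma prod_Ico_div_succ {K : Type*} [CommGroupWithZero K] {v : ℕ → K} {m n : ℕ} (hmn : m ≤ n)
    (hv : ∀ k ∈ Icc m n, v k ≠ 0) : ∏ k ∈ Ico m n, v k / v (k + 1) = v m / v n := by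
  induction n, hmn using Nat.le_induction with
  | base => simp [hv m (by simp)]
  | succ n hmn ih =>
    have hv' : ∀ k ∈ Icc m n, v k ≠ 0 := fun k hk ↦ hv k (Icc_subset_Icc_right n.le_succ hk)
    rw [prod_Ico_succ_top hmn, ih hv', div_mul_div_cancel₀ (hv' n (right_mem_Icc.2 hmn))]

lemma prod_Ioi_eq_prod_Ico {M : Type*} [CommMonoid M] {r : ℕ} (j : Fin r) (f : ℕ → M) :
    ∏ k ∈ Ioi j, f k = ∏ k ∈ Ico ((j : ℕ) + 1) r, f k := by
  have hIco : (Ioi j).map Fin.valEmbedding = Ico ((j : ℕ) + 1) r := Fin.map_valEmbedding_Ioi j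
  rw [← hIco, prod_map]
  rfl

section OrderedField

variable {K : Type*} [Field K] [LinearOrder K] [IsStrictOrderedRing K]

lemma add_div_add_le_add_div_add {c d t u : K} (hcd : c ≤ d) (ht : 0 < t + d) (htu : t ≤ u) :
    (t + c) / (t + d) ≤ (u + c) / (u + d) := by
  rw [div_le_div_iff₀ ht (by linarith)]
  nlinarith [mul_nonneg (sub_nonneg.2 hcd) (sub_nonneg.2 htu)]

lemma one_div_add_one_le_div_add {b y : K} (hb : 0 ≤ b) (hy : 1 ≤ y) :
    1 / (b + 1) ≤ y / (b + y) := by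
  rw [add_comm b, add_comm b]
  simpa only [add_zero] using add_div_add_le_add_div_add hb (by linarith : 0 < 1 + b) hy

lemma prod_Ioi_one_add_mul_div {r : ℕ} {x : K} (hx : 0 ≤ x) (j : Fin r) :
    ∏ k ∈ Ioi j, (1 + x * ((k : ℕ) - (j : ℕ) - 1)) / (1 + x * ((k : ℕ) - (j : ℕ))) =
      1 / (1 + x * ((r : K) - 1 - (j : ℕ))) := by
  let v : ℕ → K := fun n ↦ 1 + x * ((n : K) - (j : ℕ) - 1)
  have hv : ∀ n ∈ Icc ((j : ℕ) + 1) r, v n ≠ 0 := fun n hn ↦ by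
    have hjn : ((j : ℕ) : K) + 1 ≤ n := by exact_mod_cast (mem_Icc.1 hn).1
    have : 0 ≤ x * ((n : K) - (j : ℕ) - 1) := mul_nonneg hx (by linarith)
    exact (by linarith : 0 < 1 + x * ((n : K) - (j : ℕ) - 1)).ne'
  calc ∏ k ∈ Ioi j, (1 + x * ((k : ℕ) - (j : ℕ) - 1)) / (1 + x * ((k : ℕ) - (j : ℕ)))
      = ∏ k ∈ Ioi j, v k / v (k + 1) := by
        refine prod_congr rfl fun k _ ↦ ?_
        simp only [v, Nat.cast_add, Nat.cast_one]
        ring_nf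
    _ = v (j + 1) / v r := by
        rw [prod_Ioi_eq_prod_Ico j fun n ↦ v n / v (n + 1), prod_Ico_div_succ j.isLt hv]
    _ = 1 / (1 + x * ((r : K) - 1 - (j : ℕ))) := by
        simp only [v, Nat.cast_add, Nat.cast_one]
        ring_nf

end OrderedField

section Signature

variable {r : ℕ} {a b : ℝ} {w : (Fin r → ℕ) → ℝ} {s : Fin r → ℕ} {j k : Fin r}

lemma SigSub.lt_of_lt (hj : SigSub s j) (hjk : j < k) : s k < s j := by
  have hle := hj.2 hjk.le
  rw [Function.update_self, Function.update_of_ne hjk.ne'] at hle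
  have := hj.1
  omega

lemma mul_sub_one_sub_nonneg (ha : 0 ≤ a) (j : Fin r) :
    0 ≤ a / 2 * ((r : ℝ) - 1 - (j : ℕ)) := by
  have hjr : ((j : ℕ) : ℝ) + 1 ≤ r := by exact_mod_cast j.isLt
  exact mul_nonneg (by linarith) (by linarith)

lemma one_le_cPrime_factor (ha : 0 < a) (hs : s j ≤ s k) (hkj : k < j) :
    1 ≤ ((s j : ℝ) - s k + a / 2 * ((k : ℕ) - (j : ℕ) - 1)) /
      ((s j : ℝ) - s k + a / 2 * ((k : ℕ) - (j : ℕ))) := by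
  have hsjk : (s j : ℝ) ≤ s k := by exact_mod_cast hs
  have hkj' : ((k : ℕ) : ℝ) < (j : ℕ) := by exact_mod_cast hkj
  have hneg : a / 2 * (((k : ℕ) : ℝ) - (j : ℕ)) < 0 :=
    mul_neg_of_pos_of_neg (half_pos ha) (sub_neg.2 hkj')
  rw [one_le_div_of_neg (by linarith)]
  linarith

lemma one_add_mul_div_le_cPrime_factor (ha : 0 ≤ a) (hs : s k < s j) (hjk : j < k) :
    (1 + a / 2 * ((k : ℕ) - (j : ℕ) - 1)) / (1 + a / 2 * ((k : ℕ) - (j : ℕ))) ≤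
      ((s j : ℝ) - s k + a / 2 * ((k : ℕ) - (j : ℕ) - 1)) /
        ((s j : ℝ) - s k + a / 2 * ((k : ℕ) - (j : ℕ))) := by
  have hsjk : (s k : ℝ) + 1 ≤ s j := by exact_mod_cast hs
  have hjk' : ((j : ℕ) : ℝ) < (k : ℕ) := by exact_mod_cast hjk
  have hl : 0 ≤ a / 2 * (((k : ℕ) : ℝ) - (j : ℕ)) := mul_nonneg (by linarith) (by linarith)
  exact add_div_add_le_add_div_add (by linarith) (by linarith) (by linarith)

lemma one_div_le_cPrime (ha : 0 < a) (hs : Antitone s) (hj : SigSub s j) :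
    1 / (1 + a / 2 * ((r : ℝ) - 1 - (j : ℕ))) ≤ cPrime a s j := by
  have hnonneg : ∀ k ∈ Ioi j,
      0 ≤ (1 + a / 2 * ((k : ℕ) - (j : ℕ) - 1)) / (1 + a / 2 * ((k : ℕ) - (j : ℕ))) :=
    fun k hk ↦ by
      have hjk : ((j : ℕ) : ℝ) + 1 ≤ (k : ℕ) := by exact_mod_cast mem_Ioi.1 hk
      have hl : 0 ≤ a / 2 * (((k : ℕ) : ℝ) - (j : ℕ) - 1) := mul_nonneg (by linarith) (by linarith)
      exact div_nonneg (by linarith) (by linarith)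
  have hfactor := fun k (hk : k ∈ Ioi j) ↦
    one_add_mul_div_le_cPrime_factor ha.le (hj.lt_of_lt (mem_Ioi.1 hk)) (mem_Ioi.1 hk)
  rw [← prod_Ioi_one_add_mul_div (half_pos ha).le, cPrime]
  refine (prod_le_prod hnonneg hfactor).trans (prod_le_prod_of_subset_of_one_le ?_ ?_ ?_)
  · exact fun k hk ↦ mem_erase.2 ⟨(mem_Ioi.1 hk).ne', mem_univ k⟩
  · exact fun k hk ↦ (hnonneg k hk).trans (hfactor k hk)
  · intro k hk hk'
    have hkj : k < j := (not_lt.1 fun hjk ↦ hk' (mem_Ioi.2 hjk)).lt_of_ne (ne_of_mem_erase hk)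
    exact one_le_cPrime_factor ha (hs hkj.le) hkj

lemma one_div_le_mul_cPrime (ha : 0 < a) (hb : 0 ≤ b) (hs : Antitone s) (hj : SigSub s j) :
    1 / ((b + 1) * (1 + a / 2 * ((r : ℝ) - 1))) ≤
      (a / 2 * ((r : ℝ) - 1 - (j : ℕ)) + s j) / (b + a / 2 * ((r : ℝ) - 1 - (j : ℕ)) + s j) *
        cPrime a s j := by
  have hy : 0 ≤ a / 2 * ((r : ℝ) - 1 - (j : ℕ)) := mul_sub_one_sub_nonneg ha.le j
  have hsj : (1 : ℝ) ≤ s j := by exact_mod_cast hj.1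
  have hle : a / 2 * ((r : ℝ) - 1 - (j : ℕ)) ≤ a / 2 * ((r : ℝ) - 1) :=
    mul_le_mul_of_nonneg_left (sub_le_self _ (Nat.cast_nonneg _)) (half_pos ha).le
  have hquot : 1 / (b + 1) ≤
      (a / 2 * ((r : ℝ) - 1 - (j : ℕ)) + s j) / (b + a / 2 * ((r : ℝ) - 1 - (j : ℕ)) + s j) := by
    rw [add_assoc b]
    exact one_div_add_one_le_div_add hb (by linarith)
  have hcPrime : 1 / (1 + a / 2 * ((r : ℝ) - 1)) ≤ cPrime a s j :=
    (one_div_le_one_div_of_le (by linarith) (by linarith)).trans (one_div_le_cPrime ha hs hj)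
  have hr : 0 ≤ a / 2 * ((r : ℝ) - 1) := hy.trans hle
  rw [← one_div_mul_one_div]
  exact mul_le_mul hquot hcPrime (by positivity) (le_trans (by positivity) hquot)

/-- The summand `(a_{s-ε_j}/a_s)(p - (a/2)(j-1) + s_j - 1)` of the comparison sum; `τ(s)` is the
sum of these terms times factors that are bounded below uniformly. As `j : Fin r` counts from `0`,
it is the `j - 1` of the paper. -/
noncomputable def stepWeight (a b : ℝ) (w : (Fin r → ℕ) → ℝ) (s : Fin r → ℕ) (j : Fin r) : ℝ :=
  (w (Function.update s j (s j - 1)) / w s) *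
    ((1 + (a / 2) * ((r : ℝ) - 1) + b) - (a / 2) * ((j : ℕ) : ℝ) + (s j : ℝ) - 1)

lemma stepWeight_nonneg (ha : 0 ≤ a) (hb : 0 ≤ b) (hws : 0 ≤ w s)
    (hwj : 0 ≤ w (Function.update s j (s j - 1))) : 0 ≤ stepWeight a b w s j := by
  have hy := mul_sub_one_sub_nonneg ha j
  exact mul_nonneg (div_nonneg hwj hws) (by linarith [(s j).cast_nonneg (α := ℝ)])

theorem tau_lower_bound_general (ha : 0 < a) (hb : 0 ≤ b) (hs : Antitone s) (hws : 0 < w s)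
    (hw : ∀ j, SigSub s j → 0 ≤ w (Function.update s j (s j - 1))) :
    1 / ((b + 1) * (1 + a / 2 * ((r : ℝ) - 1))) * ∑ j with SigSub s j, stepWeight a b w s j ≤
      tau a b w s := by
  rw [mul_sum]
  refine sum_le_sum fun j hj ↦ ?_
  have hj : SigSub s j := (mem_filter.1 hj).2
  rw [mul_comm, mul_assoc _ _ (cPrime a s j)]
  exact mul_le_mul_of_nonneg_left (one_div_le_mul_cPrime ha hb hs hj)
    (stepWeight_nonneg ha.le hb hws.le (hw j hj))

end Signature

/-- The key estimate in the proof of Theorem 3.6: for every nonzero signature `s`,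
`τ(s) ≥ (1/((b+1)(1 + (a/2)(r−1))^r)) · Σ_j (a_{s−ε_j}/a_s)·(p − (a/2)(j−1) + s_j − 1)`,
the sum being over those `j` for which `s − ε_j` is a signature. -/
theorem tau_lower_bound (r : ℕ) (hr : 0 < r) (a b : ℝ) (ha : 0 < a) (hb : 0 ≤ b)
    (w : (Fin r → ℕ) → ℝ) (hw : ∀ s : Fin r → ℕ, Antitone s → 0 < w s)
    (s : Fin r → ℕ) (hs : Antitone s) (hs0 : s ≠ 0) :
    (1 / ((b + 1) * (1 + (a / 2) * ((r : ℝ) - 1)) ^ r)) *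
        (∑ j ∈ Finset.univ.filter (fun j : Fin r => SigSub s j),
          (w (Function.update s j (s j - 1)) / w s) *
            ((1 + (a / 2) * ((r : ℝ) - 1) + b) - (a / 2) * ((j : ℕ) : ℝ) + (s j : ℝ) - 1)) ≤
      tau a b w s := by
  have hw' : ∀ j, SigSub s j → 0 ≤ w (Function.update s j (s j - 1)) := fun j hj ↦ (hw _ hj.2).le
  have hsum : 0 ≤ ∑ j with SigSub s j, stepWeight a b w s j := sum_nonneg fun j hj ↦
    stepWeight_nonneg ha.le hb (hw s hs).le (hw' j (mem_filter.1 hj).2)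
  have hD : 1 ≤ 1 + a / 2 * ((r : ℝ) - 1) :=
    le_add_of_nonneg_right <| mul_nonneg (half_pos ha).le <| sub_nonneg.2 <| Nat.one_le_cast.2 hr
  refine (mul_le_mul_of_nonneg_right ?_ hsum).trans
    (tau_lower_bound_general ha hb hs (hw s hs) hw')
  gcongr
  exact le_self_pow₀ hD hr.ne'
end
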